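/- arXiv:1210.3063 — 4 statements merged into one kernel-verified Lean document; each statement's English description precedes it below -/
import Mathlib

section
/- For all integers p ≥ 1, k ≥ 1 and real numbers t_1, ..., t_p, the multivariate Fuss-Narayana polynomial F_k(t_1, ..., t_p) = Σ (1/k) ∏_{i=0}^{p} C(k, j_i) · t_1^{j_1} t_2^{j_2} ··· t_p^{j_p} (sum over tuples (j_0,...,j_p) of positive integers with j_0 + ... + j_p = pk + 1) equals P_k(1, t_1, ..., t_p), i.e. F_k(t_1,...,t_p) = Σ_{π ∈ NC²_{2pk}(W_0^k)} t_1^{j_1(π)} t_2^{j_2(π)} ··· t_p^{j_p(π)}. -/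
/-- The letter at position `r` (1-based, `1 ≤ r ≤ 2p`) of the word
`W₀ = 1 2 … p p* … 2* 1*`; here `(l, false)` encodes the letter `l` and
`(l, true)` encodes the starred letter `l*`. -/
def letter0 (p r : ℕ) : ℕ × Bool :=
  if r ≤ p then (r, false) else (2 * p + 1 - r, true)

/-- The label of position `m` (1-based) under the periodic word `Wᵢᵏ`, where `Wᵢ`
is the cyclic shift of `W₀` to the right by `i` positions. -/
def labelW (p i m : ℕ) : ℕ × Bool :=
  letter0 p ((m - 1 + (2 * p - i)) % (2 * p) + 1)

/-- `π` is a noncrossing pair partition of `{1, …, m}`, encoded as the finite set of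
its blocks, each block written as an ordered pair `(a, b)` with `a < b`:
all entries lie in `{1, …, m}`, every point of `{1, …, m}` is covered, distinct
blocks are disjoint, and no two blocks cross. -/
def IsNCPP (m : ℕ) (π : Finset (ℕ × ℕ)) : Prop :=
  (∀ b ∈ π, 1 ≤ b.1 ∧ b.2 ≤ m ∧ b.1 < b.2) ∧
  (∀ x, 1 ≤ x → x ≤ m → ∃ b ∈ π, x = b.1 ∨ x = b.2) ∧
  (∀ b ∈ π, ∀ c ∈ π, (b.1 = c.1 ∨ b.1 = c.2 ∨ b.2 = c.1 ∨ b.2 = c.2) → b = c) ∧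
  (∀ b ∈ π, ∀ c ∈ π, ¬(b.1 < c.1 ∧ c.1 < b.2 ∧ b.2 < c.2))

/-- `π ∈ NC²₂ₚₖ(Wᵢᵏ)`: a noncrossing pair partition of `{1, …, 2pk}` each of whose
blocks consists of a position labelled `l` and a position labelled `l*` for some
`l ∈ {1, …, p}` (labels taken from the word `Wᵢᵏ`). -/
def AdaptedNCPP (p i k : ℕ) (π : Finset (ℕ × ℕ)) : Prop :=
  IsNCPP (2 * p * k) π ∧
  ∀ b ∈ π, ∃ l, 1 ≤ l ∧ l ≤ p ∧
    ((labelW p i b.1 = (l, false) ∧ labelW p i b.2 = (l, true)) ∨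
     (labelW p i b.1 = (l, true) ∧ labelW p i b.2 = (l, false)))

/-- The right-leg statistic `jₗ(π) = |R_{l+1}(π)| + |R_{l}*(π)|`: the number of blocks
whose right leg (larger element) is labelled `l+1`, plus the number of blocks whose
right leg is labelled `l*` (the conventions `R₀* = R_{p+1} = ∅` hold automatically,
since those labels never occur). -/
def jstat (p i : ℕ) (π : Finset (ℕ × ℕ)) (l : ℕ) : ℕ :=
  (π.filter fun b => labelW p i b.2 = (l + 1, false)).card +
  (π.filter fun b => labelW p i b.2 = (l, true)).card

open Classical in
/-- The finset `NC²₂ₚₖ(Wᵢᵏ)` of noncrossing pair partitions of `{1, …, 2pk}`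
adapted to `Wᵢᵏ`. -/
noncomputable def NCset (p i k : ℕ) : Finset (Finset (ℕ × ℕ)) :=
  (Finset.Icc 1 (2 * p * k) ×ˢ Finset.Icc 1 (2 * p * k)).powerset.filter
    (AdaptedNCPP p i k)

open Classical in
/-- `Nᵢ(k, (j₀, …, j_p))`: the number of `π ∈ NC²₂ₚₖ(Wᵢᵏ)` with `jₗ(π) = jₗ`
for all `0 ≤ l ≤ p`. -/
noncomputable def Ncount (p i k : ℕ) (j : Fin (p + 1) → ℕ) : ℕ :=
  ((NCset p i k).filter fun π => ∀ l : Fin (p + 1), jstat p i π (l : ℕ) = j l).card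

/-- The generating function `𝒩ᵢ(x, d) = Σ_k (Σ_j Nᵢ(k, j) d^j) x^k ∈ ℝ[[x]]`;
for each `k` only finitely many of the counts `Nᵢ(k, j)` are nonzero, so the inner
`tsum` is a finite sum. -/
noncomputable def genFun (p i : ℕ) (d : Fin (p + 1) → ℝ) : PowerSeries ℝ :=
  PowerSeries.mk fun k =>
    ∑' j : Fin (p + 1) → ℕ, (Ncount p i k j : ℝ) * ∏ l, d l ^ j l

open Finset in
theorem lagr (φ : Polynomial ℝ) (B : PowerSeries ℝ)
    (hB : B = PowerSeries.X * Polynomial.aeval B φ) (n : ℕ) :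
    ∀ m, 1 ≤ m → m ≤ n → (n : ℝ) * PowerSeries.coeff n (B ^ m) = m * (φ ^ n).coeff (n - m) := by
  induction n using Nat.strong_induction_on with
  | _ n ih =>
    intro m hm hmn
    have h1 : PowerSeries.coeff n (B ^ m) =
        PowerSeries.coeff (n - m) (Polynomial.aeval B (φ ^ m)) := by
      have : B ^ m = PowerSeries.X ^ m * Polynomial.aeval B (φ ^ m) := by
        conv_lhs => rw [hB]
        rw [mul_pow, map_pow]
      rw [this, PowerSeries.coeff_X_pow_mul']
      simp [hmn]
    have hB0 : PowerSeries.constantCoeff B = 0 := by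
      rw [hB]; simp
    rw [h1, Polynomial.aeval_eq_sum_range, map_sum]
    simp only [PowerSeries.coeff_smul]
    rcases Nat.eq_or_lt_of_le hmn with h | h
    · subst h
      have : ∀ i ∈ range ((φ ^ m).natDegree + 1), i ≠ 0 →
          (φ ^ m).coeff i • PowerSeries.coeff (m - m) (B ^ i) = 0 := by
        intro i _ hi
        simp [hB0, hi]
      rw [Finset.sum_eq_single 0 (fun i h1 h2 => this i h1 h2) (by simp)]
      simp
    · obtain ⟨d, rfl⟩ : ∃ d, n = m + (d + 1) := ⟨n - m - 1, by omega⟩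
      have hd : m + (d + 1) - m = d + 1 := by omega
      rw [hd]
      have hlow : ∀ i, d + 1 < i → PowerSeries.coeff (d + 1) (B ^ i) = 0 := by
        intro i hi
        have : B ^ i = PowerSeries.X ^ i * Polynomial.aeval B (φ ^ i) := by
          conv_lhs => rw [hB]
          rw [mul_pow, map_pow]
        rw [this, PowerSeries.coeff_X_pow_mul']
        simp; omega
      have e1 : ∑ i ∈ range ((φ ^ m).natDegree + 1),
          (φ ^ m).coeff i • PowerSeries.coeff (d + 1) (B ^ i) =
          ∑ i ∈ range (d + 2), (φ ^ m).coeff i • PowerSeries.coeff (d + 1) (B ^ i) := by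
        rcases le_total ((φ ^ m).natDegree + 1) (d + 2) with h | h
        · apply Finset.sum_subset (by simpa using h)
          intro i _ hi
          rw [Polynomial.coeff_eq_zero_of_natDegree_lt (by simpa using hi)]; simp
        · symm
          apply Finset.sum_subset (by simpa using h)
          intro i _ hi
          rw [hlow i (by simp at hi; omega)]; simp
      rw [e1]
      have e2 : ((d + 1 : ℕ) : ℝ) * ∑ i ∈ range (d + 2),
          (φ ^ m).coeff i • PowerSeries.coeff (d + 1) (B ^ i) =
          (Polynomial.X * Polynomial.derivative (φ ^ m) * φ ^ (d + 1)).coeff (d + 1) := by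
        rw [Polynomial.coeff_mul, Finset.Nat.sum_antidiagonal_eq_sum_range_succ_mk, Finset.mul_sum]
        apply Finset.sum_congr rfl
        intro i hi
        rcases i with _ | i
        · simp
        · have := ih (d + 1) (by omega) (i + 1) (by omega) (by simp at hi; omega)
          simp only [Polynomial.coeff_X_mul, Polynomial.coeff_derivative, smul_eq_mul]
          rw [mul_left_comm, this]
          push_cast; ring
      have e3 : ((m + (d + 1) : ℕ) : ℝ) * (Polynomial.X * Polynomial.derivative (φ ^ m) * φ ^ (d + 1)).coeff (d + 1)
          = m * ((d + 1 : ℕ) * (φ ^ (m + (d + 1))).coeff (d + 1)) := by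
        have : Polynomial.C ((m + (d + 1) : ℕ) : ℝ) * (Polynomial.X * Polynomial.derivative (φ ^ m) * φ ^ (d + 1)) =
          Polynomial.C (m : ℝ) * (Polynomial.X * Polynomial.derivative (φ ^ (m + (d + 1)))) := by
          obtain ⟨m, rfl⟩ : ∃ m', m = m' + 1 := ⟨m - 1, by omega⟩
          rw [Polynomial.derivative_pow, Polynomial.derivative_pow]
          have : m + 1 + (d + 1) - 1 = m + (d + 1) := by omega
          rw [this, pow_add]
          simp only [Nat.add_sub_cancel]
          ring
        have := congrArg (fun q => Polynomial.coeff q (d + 1)) this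
        simp only [Polynomial.coeff_C_mul, Polynomial.coeff_X_mul, Polynomial.coeff_derivative] at this
        rw [this]; push_cast; ring
      have hne : ((d + 1 : ℕ) : ℝ) ≠ 0 := by positivity
      apply mul_left_cancel₀ hne
      rw [mul_left_comm, e2, e3]; ring


theorem lagr_coeff (p k : ℕ) (T : Fin (p+1) → ℝ) (hk : 1 ≤ k) :
    ((∏ l, (Polynomial.C (T l) + Polynomial.X)) ^ k : Polynomial ℝ).coeff (k - 1) =
    ∑ j ∈ (Finset.Nat.antidiagonalTuple (p + 1) (p * k + 1)).filter
        (fun j => ∀ l, 1 ≤ j l), ∏ i, ((Nat.choose k (j i) : ℝ) * T i ^ j i) := by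
  have h1 : ((∏ l, (Polynomial.C (T l) + Polynomial.X)) ^ k : Polynomial ℝ) =
      ∑ j ∈ Fintype.piFinset (fun _ : Fin (p+1) => Finset.range (k+1)),
        Polynomial.C (∏ i, ((Nat.choose k (j i) : ℝ) * T i ^ j i)) *
          Polynomial.X ^ (∑ i, (k - j i)) := by
    rw [← Finset.prod_pow]
    simp_rw [add_pow]
    rw [Finset.prod_univ_sum]
    apply Finset.sum_congr rfl
    intro j _
    rw [← Finset.prod_pow_eq_pow_sum, map_prod, ← Finset.prod_mul_distrib]
    apply Finset.prod_congr rfl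
    intro i _
    simp only [map_mul, map_pow, map_natCast]
    ring
  rw [h1, Polynomial.finsetSum_coeff]
  simp only [Polynomial.coeff_C_mul, Polynomial.coeff_X_pow, mul_ite, mul_one, mul_zero]
  rw [← Finset.sum_filter]
  have key : ∀ j : Fin (p+1) → ℕ, (∀ i, j i ≤ k) → (∑ i, (k - j i)) + ∑ i, j i = (p+1) * k := by
    intro j hj
    rw [← Finset.sum_add_distrib, Finset.sum_congr rfl (fun i _ => Nat.sub_add_cancel (hj i))]
    simp
  have e : (p + 1) * k = p * k + k := by ring
  apply Finset.sum_subset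
  · intro j hj
    simp only [Finset.mem_filter, Fintype.mem_piFinset, Finset.mem_range,
      Finset.Nat.mem_antidiagonalTuple] at hj ⊢
    have := key j (fun i => by have := hj.1 i; omega)
    refine ⟨by omega, fun l => ?_⟩
    have h2 := Finset.single_le_sum (f := fun i => k - j i) (fun i _ => Nat.zero_le _) (Finset.mem_univ l)
    omega
  · intro j hj hn
    simp only [Finset.mem_filter, Fintype.mem_piFinset, Finset.mem_range,
      Finset.Nat.mem_antidiagonalTuple] at hj hn
    have : ¬ ∀ i, j i < k + 1 := by
      intro h
      have := key j (fun i => by have := h i; omega)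
      exact hn ⟨h, by omega⟩
    push Not at this
    obtain ⟨i, hi⟩ := this
    apply Finset.prod_eq_zero (Finset.mem_univ i)
    rw [Nat.choose_eq_zero_of_lt (by omega)]; simp

/-- noncrossing pairings of the interval `[i, j)` compatible with `M`. -/
def GoodP (M : ℕ → ℕ → Prop) (i j : ℕ) (π : Finset (ℕ × ℕ)) : Prop :=
  (∀ b ∈ π, i ≤ b.1 ∧ b.2 < j ∧ b.1 < b.2) ∧
  (∀ x, i ≤ x → x < j → ∃ b ∈ π, x = b.1 ∨ x = b.2) ∧
  (∀ b ∈ π, ∀ c ∈ π, (b.1 = c.1 ∨ b.1 = c.2 ∨ b.2 = c.1 ∨ b.2 = c.2) → b = c) ∧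
  (∀ b ∈ π, ∀ c ∈ π, ¬(b.1 < c.1 ∧ c.1 < b.2 ∧ b.2 < c.2)) ∧
  (∀ b ∈ π, M b.1 b.2)

open Classical in
noncomputable def GP (M : ℕ → ℕ → Prop) (i j : ℕ) : Finset (Finset (ℕ × ℕ)) :=
  (Finset.Ico i j ×ˢ Finset.Ico i j).powerset.filter (GoodP M i j)

theorem mem_GP (M : ℕ → ℕ → Prop) (i j : ℕ) (π) : π ∈ GP M i j ↔ GoodP M i j π := by
  classical
  simp only [GP, Finset.mem_filter, Finset.mem_powerset, and_iff_right_iff_imp]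
  intro h b hb
  have := h.1 b hb
  simp only [Finset.mem_product, Finset.mem_Ico]
  omega

noncomputable def SP (M : ℕ → ℕ → Prop) (w : ℕ → ℝ) (i j : ℕ) : ℝ :=
  ∑ π ∈ GP M i j, ∏ b ∈ π, w b.2

theorem SP_self (M w i) : SP M w i i = 1 := by
  have : GP M i i = {∅} := by
    ext π
    rw [mem_GP, Finset.mem_singleton]
    constructor
    · intro h
      rw [Finset.eq_empty_iff_forall_notMem]
      intro b hb
      have := h.1 b hb
      omega
    · rintro rfl
      refine ⟨by simp, ?_, by simp, by simp, by simp⟩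
      intro x h1 h2; omega
  simp [SP, this]

theorem GoodP_join {M : ℕ → ℕ → Prop} {i j m : ℕ} (h1 : i < m) (h2 : m < j) (hM : M i m)
    {π ρ : Finset (ℕ × ℕ)} (hπ : GoodP M (i+1) m π) (hρ : GoodP M (m+1) j ρ) :
    GoodP M i j (insert (i, m) (π ∪ ρ)) := by
  obtain ⟨a1, a2, a3, a4, a5⟩ := hπ
  obtain ⟨b1, b2, b3, b4, b5⟩ := hρ
  refine ⟨?_, ?_, ?_, ?_, ?_⟩
  · intro b hb
    simp only [Finset.mem_insert, Finset.mem_union] at hb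
    rcases hb with rfl | hb | hb
    · simp; omega
    · have := a1 b hb; omega
    · have := b1 b hb; omega
  · intro x hx1 hx2
    simp only [Finset.mem_insert, Finset.mem_union]
    by_cases hi : x = i
    · exact ⟨(i, m), Or.inl rfl, Or.inl hi⟩
    by_cases hm : x = m
    · exact ⟨(i, m), Or.inl rfl, Or.inr hm⟩
    rcases Nat.lt_or_ge x m with h | h
    · obtain ⟨b, hb, hb'⟩ := a2 x (by omega) h
      exact ⟨b, by tauto, hb'⟩
    · obtain ⟨b, hb, hb'⟩ := b2 x (by omega) (by omega)
      exact ⟨b, by tauto, hb'⟩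
  · intro b hb c hc h
    simp only [Finset.mem_insert, Finset.mem_union] at hb hc
    rcases hb with rfl | hb | hb <;> rcases hc with rfl | hc | hc
    · rfl
    · have := a1 c hc; simp at h; omega
    · have := b1 c hc; simp at h; omega
    · have := a1 b hb; simp at h; omega
    · exact a3 b hb c hc h
    · have := a1 b hb; have := b1 c hc; omega
    · have := b1 b hb; simp at h; omega
    · have := b1 b hb; have := a1 c hc; omega
    · exact b3 b hb c hc h
  · intro b hb c hc h
    simp only [Finset.mem_insert, Finset.mem_union] at hb hc
    rcases hb with rfl | hb | hb <;> rcases hc with rfl | hc | hc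
    · simp at h
    · have := a1 c hc; simp at h; omega
    · have := b1 c hc; simp at h; omega
    · have := a1 b hb; simp at h; omega
    · exact a4 b hb c hc h
    · have := a1 b hb; have := b1 c hc; omega
    · have := b1 b hb; simp at h; omega
    · have := b1 b hb; have := a1 c hc; omega
    · exact b4 b hb c hc h
  · intro b hb
    simp only [Finset.mem_insert, Finset.mem_union] at hb
    rcases hb with rfl | hb | hb
    · exact hM
    · exact a5 b hb
    · exact b5 b hb

theorem GoodP_split {M : ℕ → ℕ → Prop} {i j : ℕ} (h : i < j)
    {π : Finset (ℕ × ℕ)} (hπ : GoodP M i j π) :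
    ∃ m, i < m ∧ m < j ∧ M i m ∧ ∃ ρ σ, GoodP M (i+1) m ρ ∧ GoodP M (m+1) j σ ∧
      insert (i, m) (ρ ∪ σ) = π := by
  obtain ⟨a1, a2, a3, a4, a5⟩ := hπ
  obtain ⟨⟨i', m⟩, hb, hb'⟩ := a2 i le_rfl h
  have hi := a1 _ hb
  simp only at hi hb'
  obtain rfl : i = i' := by omega
  have tri : ∀ b ∈ π, b = (i, m) ∨ (i < b.1 ∧ b.2 < m) ∨ m < b.1 := by
    intro b hbm
    by_cases hne : b = (i, m)
    · exact Or.inl hne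
    · right
      have h1 := a1 b hbm
      have h2 := a3 b hbm _ hb
      have h3 := a4 _ hb b hbm
      simp only [hne, imp_false] at h2 h3
      omega
  refine ⟨m, hi.2.2, hi.2.1, a5 _ hb, π.filter (fun b => i < b.1 ∧ b.2 < m),
    π.filter (fun b => m < b.1), ⟨?_, ?_, ?_, ?_, ?_⟩, ⟨?_, ?_, ?_, ?_, ?_⟩, ?_⟩
  · intro b hb
    simp only [Finset.mem_filter] at hb
    have := a1 b hb.1
    omega
  · intro x hx1 hx2
    obtain ⟨b, hb1, hb2⟩ := a2 x (by omega) (by omega)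
    refine ⟨b, ?_, hb2⟩
    simp only [Finset.mem_filter]
    refine ⟨hb1, ?_⟩
    have := a1 b hb1
    rcases tri b hb1 with rfl | h | h
    · simp at hb2; omega
    · exact h
    · omega
  · intro b hb c hc
    exact a3 b (Finset.mem_filter.1 hb).1 c (Finset.mem_filter.1 hc).1
  · intro b hb c hc
    exact a4 b (Finset.mem_filter.1 hb).1 c (Finset.mem_filter.1 hc).1
  · intro b hb
    exact a5 b (Finset.mem_filter.1 hb).1
  · intro b hb
    simp only [Finset.mem_filter] at hb
    have := a1 b hb.1
    omega
  · intro x hx1 hx2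
    obtain ⟨b, hb1, hb2⟩ := a2 x (by omega) (by omega)
    refine ⟨b, ?_, hb2⟩
    simp only [Finset.mem_filter]
    refine ⟨hb1, ?_⟩
    have := a1 b hb1
    rcases tri b hb1 with rfl | h | h
    · simp at hb2; omega
    · omega
    · omega
  · intro b hb c hc
    exact a3 b (Finset.mem_filter.1 hb).1 c (Finset.mem_filter.1 hc).1
  · intro b hb c hc
    exact a4 b (Finset.mem_filter.1 hb).1 c (Finset.mem_filter.1 hc).1
  · intro b hb
    exact a5 b (Finset.mem_filter.1 hb).1
  · ext b
    simp only [Finset.mem_insert, Finset.mem_union, Finset.mem_filter]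
    constructor
    · rintro (rfl | h | h)
      · exact hb
      · exact h.1
      · exact h.1
    · intro h
      have := tri b h
      tauto

theorem join_inj {M : ℕ → ℕ → Prop} {i j m m' : ℕ}
    {π ρ π' ρ' : Finset (ℕ × ℕ)} (hπ : GoodP M (i+1) m π) (hρ : GoodP M (m+1) j ρ)
    (h1 : i < m) (h1' : i < m')
    (hπ' : GoodP M (i+1) m' π') (hρ' : GoodP M (m'+1) j ρ')
    (h : insert (i, m) (π ∪ ρ) = insert (i, m') (π' ∪ ρ')) : m = m' ∧ π = π' ∧ ρ = ρ' := by
  have hm : m = m' := by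
    have : (i, m) ∈ insert (i, m') (π' ∪ ρ') := by rw [← h]; simp
    simp only [Finset.mem_insert, Finset.mem_union, Prod.mk.injEq, true_and] at this
    rcases this with h | h | h
    · exact h
    · have := hπ'.1 _ h; simp at this
    · have := hρ'.1 _ h; simp at this; omega
  subst hm
  refine ⟨rfl, ?_, ?_⟩
  · ext b
    have hb := Finset.ext_iff.1 h b
    simp only [Finset.mem_insert, Finset.mem_union] at hb
    constructor
    · intro hh
      have := hπ.1 b hh
      rcases hb.1 (by tauto) with rfl | h | h
      · simp at this
      · exact h
      · have := hρ'.1 b h; omega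
    · intro hh
      have := hπ'.1 b hh
      rcases hb.2 (by tauto) with rfl | h | h
      · simp at this
      · exact h
      · have := hρ.1 b h; omega
  · ext b
    have hb := Finset.ext_iff.1 h b
    simp only [Finset.mem_insert, Finset.mem_union] at hb
    constructor
    · intro hh
      have := hρ.1 b hh
      rcases hb.1 (by tauto) with rfl | h | h
      · simp at this; omega
      · have := hπ'.1 b h; omega
      · exact h
    · intro hh
      have := hρ'.1 b hh
      rcases hb.2 (by tauto) with rfl | h | h
      · simp at this; omega
      · have := hπ.1 b h; omega
      · exact h

open Classical in
theorem SP_rec (M : ℕ → ℕ → Prop) (w : ℕ → ℝ) (i j : ℕ) (h : i < j) :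
    SP M w i j = ∑ m ∈ Finset.Ico (i+1) j, (if M i m then w m else 0) *
      (SP M w (i+1) m * SP M w (m+1) j) := by
  simp only [ite_mul, zero_mul]
  rw [← Finset.sum_filter]
  simp only [SP, Finset.sum_mul_sum]
  simp only [← Finset.sum_product']
  simp only [Finset.mul_sum]
  rw [Finset.sum_sigma']
  symm
  refine Finset.sum_bij (fun x _ => insert (i, x.1) (x.2.1 ∪ x.2.2)) ?_ ?_ ?_ ?_
  · rintro ⟨m, π, ρ⟩ hx
    simp only [Finset.mem_sigma, Finset.mem_filter, Finset.mem_Ico, Finset.mem_product, mem_GP] at hx ⊢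
    exact GoodP_join (by omega) (by omega) hx.1.2 hx.2.1 hx.2.2
  · rintro ⟨m, π, ρ⟩ hx ⟨m', π', ρ'⟩ hx' he
    simp only [Finset.mem_sigma, Finset.mem_filter, Finset.mem_Ico, Finset.mem_product, mem_GP] at hx hx'
    obtain ⟨rfl, rfl, rfl⟩ := join_inj hx.2.1 hx.2.2 (by omega) (by omega) hx'.2.1 hx'.2.2 he
    rfl
  · intro π hπ
    obtain ⟨m, h1, h2, h3, ρ, σ, h4, h5, h6⟩ := GoodP_split h ((mem_GP _ _ _ _).1 hπ)
    refine ⟨⟨m, ρ, σ⟩, ?_, h6⟩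
    simp only [Finset.mem_sigma, Finset.mem_filter, Finset.mem_Ico, Finset.mem_product, mem_GP]
    exact ⟨⟨by omega, h3⟩, h4, h5⟩
  · rintro ⟨m, π, ρ⟩ hx
    simp only [Finset.mem_sigma, Finset.mem_filter, Finset.mem_Ico, Finset.mem_product, mem_GP] at hx
    obtain ⟨⟨h0, h1⟩, h2, h3⟩ := hx
    rw [Finset.prod_insert, Finset.prod_union]
    · rw [Finset.disjoint_left]
      intro b hb hb'
      have := h2.1 b hb
      have := h3.1 b hb'
      omega
    · simp only [Finset.mem_union, not_or]
      constructor
      · intro h; have := h2.1 _ h; simp at this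
      · intro h; have := h3.1 _ h; simp at this; omega

open Classical in
theorem SP_rec_last (M : ℕ → ℕ → Prop) (w : ℕ → ℝ) (n : ℕ) : ∀ (i j : ℕ), i ≤ j → j - i = n →
    SP M w i (j+1) = ∑ m ∈ Finset.Ico i j, (if M m j then w j else 0) *
      (SP M w i m * SP M w (m+1) j) := by
  induction n using Nat.strong_induction_on with
  | _ n ih =>
    intro i j hij hn
    rw [SP_rec _ _ _ _ (by omega)]
    rcases Nat.eq_or_lt_of_le hij with rfl | hlt
    · simp
    rw [Finset.sum_Ico_succ_top (by omega), Finset.sum_eq_sum_Ico_succ_bot hlt, SP_self, SP_self, add_comm]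
    congr 1
    · ring
    have e1 : ∀ m ∈ Finset.Ico (i+1) j, (if M i m then w m else 0) *
      (SP M w (i+1) m * SP M w (m+1) (j+1)) = ∑ m' ∈ Finset.Ico (m+1) j,
        (if M i m then w m else 0) * (if M m' j then w j else 0) *
          (SP M w (i+1) m * SP M w (m+1) m' * SP M w (m'+1) j) := by
      intro m hm
      simp only [Finset.mem_Ico] at hm
      rw [ih (j - (m+1)) (by omega) (m+1) j (by omega) rfl, Finset.mul_sum, Finset.mul_sum]
      apply Finset.sum_congr rfl
      intros; ring
    have e2 : ∀ m' ∈ Finset.Ico (i+1) j, (if M m' j then w j else 0) *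
      (SP M w i m' * SP M w (m'+1) j) = ∑ m ∈ Finset.Ico (i+1) m',
        (if M i m then w m else 0) * (if M m' j then w j else 0) *
          (SP M w (i+1) m * SP M w (m+1) m' * SP M w (m'+1) j) := by
      intro m' hm
      simp only [Finset.mem_Ico] at hm
      rw [SP_rec _ _ i m' (by omega), Finset.sum_mul, Finset.mul_sum]
      apply Finset.sum_congr rfl
      intros; ring
    rw [Finset.sum_congr rfl e1, Finset.sum_congr rfl e2]
    apply Finset.sum_comm'
    intro x y
    simp only [Finset.mem_Ico]
    omega

theorem SP_shift (M : ℕ → ℕ → Prop) (w : ℕ → ℝ) (N : ℕ)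
    (hM : ∀ x y, M (x + N) (y + N) ↔ M x y) (hw : ∀ x, w (x + N) = w x) (n : ℕ) :
    ∀ i j, i ≤ j → j - i = n → SP M w (i + N) (j + N) = SP M w i j := by
  classical
  induction n using Nat.strong_induction_on with
  | _ n ih =>
    intro i j hij hn
    rcases Nat.eq_or_lt_of_le hij with rfl | hlt
    · rw [SP_self, SP_self]
    rw [SP_rec _ _ _ _ (by omega), SP_rec _ _ i j (by omega)]
    have : i + N + 1 = i + 1 + N := by omega
    rw [this, ← Finset.sum_Ico_add']
    apply Finset.sum_congr rfl
    intro m hm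
    simp only [Finset.mem_Ico] at hm
    have e : m + N + 1 = m + 1 + N := by omega
    rw [e, ih (m - (i+1)) (by omega) (i+1) m (by omega) rfl,
      ih (j - (m+1)) (by omega) (m+1) j (by omega) rfl, hw]
    simp only [hM]

theorem SP_shift' (M : ℕ → ℕ → Prop) (w : ℕ → ℝ) (N : ℕ)
    (hM : ∀ x y, M (x + N) (y + N) ↔ M x y) (hw : ∀ x, w (x + N) = w x) (q i j : ℕ)
    (hij : i ≤ j) : SP M w (i + N * q) (j + N * q) = SP M w i j := by
  induction q with
  | zero => simp
  | succ q ih =>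
    rw [← ih, Nat.mul_succ, ← add_assoc, ← add_assoc]
    exact SP_shift M w N hM hw _ _ _ (by omega) rfl

/-- matching relation of a colour function -/
def MC (c : ℕ → ℕ) (x y : ℕ) : Prop := c x = c (y+1) ∧ c (x+1) = c y

theorem SP_rotate (c : ℕ → ℕ) (t : ℕ → ℝ) (n : ℕ) (hn : 1 ≤ n) (hc : ∀ x, c (x + n) = c x) (i : ℕ) :
    t (c i) * SP (MC c) (fun x => t (c x)) i (i + n) =
    t (c (i+1)) * SP (MC c) (fun x => t (c x)) (i+1) (i + 1 + n) := by
  classical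
  have : i + 1 + n = i + n + 1 := by omega
  rw [this, SP_rec _ _ _ _ (by omega), SP_rec_last _ _ _ (i+1) (i+n) (by omega) rfl, Finset.mul_sum,
    Finset.mul_sum]
  apply Finset.sum_congr rfl
  intro m hm
  have h1 : MC c m (i + n) ↔ MC c i m := by
    have : i + n + 1 = i + 1 + n := by omega
    simp only [MC, this, hc]
    constructor <;> (rintro ⟨h1, h2⟩; exact ⟨h2.symm, h1.symm⟩)
  simp only [h1, hc]
  by_cases h : MC c i m
  · simp only [h, if_true, h.2]; ring
  · simp [h]

theorem SP_rotate_to (c : ℕ → ℕ) (t : ℕ → ℝ) (n : ℕ) (hn : 1 ≤ n) (hc : ∀ x, c (x + n) = c x) (i d : ℕ) :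
    t (c i) * SP (MC c) (fun x => t (c x)) i (i + n) =
    t (c (i+d)) * SP (MC c) (fun x => t (c x)) (i+d) (i + d + n) := by
  induction d with
  | zero => rfl
  | succ d ih => rw [ih, SP_rotate c t n hn hc]; rfl

/-- colour before the step at (1-based) position `x` -/
def colW (p x : ℕ) : ℕ :=
  if (x + 2 * p - 1) % (2 * p) ≤ p then (x + 2 * p - 1) % (2 * p)
  else 2 * p - (x + 2 * p - 1) % (2 * p)

theorem colW_eq (p r a : ℕ) (hr : r < 2 * p) :
    colW p (1 + r + 2 * p * a) = if r ≤ p then r else 2 * p - r := by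
  have h : (1 + r + 2 * p * a + 2 * p - 1) % (2 * p) = r := by
    have : 1 + r + 2 * p * a + 2 * p - 1 = r + 2 * p * (a + 1) := by
      rw [Nat.mul_add]; omega
    rw [this, Nat.add_mul_mod_self_left, Nat.mod_eq_of_lt hr]
  simp only [colW, h]

theorem colW_succ (p r a : ℕ) (hr : r < 2 * p) :
    colW p (1 + r + 2 * p * a + 1) = if r < p then r + 1 else 2 * p - r - 1 := by
  by_cases h : r + 1 < 2 * p
  · have : 1 + r + 2 * p * a + 1 = 1 + (r + 1) + 2 * p * a := by ring
    rw [this, colW_eq p (r+1) a h]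
    split_ifs <;> omega
  · have : 1 + r + 2 * p * a + 1 = 1 + 0 + 2 * p * (a + 1) := by
      rw [Nat.mul_add]; omega
    rw [this, colW_eq p 0 (a+1) (by omega)]
    split_ifs <;> omega

theorem exists_rep (p x : ℕ) (hp : 1 ≤ p) (hx : 1 ≤ x) :
    ∃ r a, r < 2 * p ∧ x = 1 + r + 2 * p * a := by
  refine ⟨(x - 1) % (2 * p), (x - 1) / (2 * p), Nat.mod_lt _ (by omega), ?_⟩
  have := Nat.mod_add_div (x - 1) (2 * p)
  omega

theorem label_eq (p r a : ℕ) (hr : r < 2 * p) :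
    labelW p 0 (1 + r + 2 * p * a) = if r < p then (r + 1, false) else (2 * p - r, true) := by
  have h : (1 + r + 2 * p * a - 1 + (2 * p - 0)) % (2 * p) = r := by
    have : 1 + r + 2 * p * a - 1 + (2 * p - 0) = r + 2 * p * (a + 1) := by
      rw [Nat.mul_add]; omega
    rw [this, Nat.add_mul_mod_self_left, Nat.mod_eq_of_lt hr]
  simp only [labelW, letter0, h]
  split_ifs <;> first | omega | rfl | (congr 1; omega)

theorem colW_period (p x : ℕ) (hp : 1 ≤ p) : colW p (x + 2 * p) = colW p x := by
  have : (x + 2 * p + 2 * p - 1) % (2 * p) = (x + 2 * p - 1) % (2 * p) := by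
    have : x + 2 * p + 2 * p - 1 = x + 2 * p - 1 + 2 * p := by omega
    rw [this, Nat.add_mod_right]
  simp only [colW, this]

theorem colW_period' (p x q : ℕ) (hp : 1 ≤ p) : colW p (x + 2 * p * q) = colW p x := by
  induction q with
  | zero => simp
  | succ q ih => rw [← ih, Nat.mul_succ, ← add_assoc, colW_period p _ hp]

theorem label_match (p x y : ℕ) (hp : 1 ≤ p) (hx : 1 ≤ x) (hy : 1 ≤ y) :
    (∃ l, 1 ≤ l ∧ l ≤ p ∧
    ((labelW p 0 x = (l, false) ∧ labelW p 0 y = (l, true)) ∨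
     (labelW p 0 x = (l, true) ∧ labelW p 0 y = (l, false)))) ↔ MC (colW p) x y := by
  obtain ⟨r, a, hr, rfl⟩ := exists_rep p x hp hx
  obtain ⟨s, b, hs, rfl⟩ := exists_rep p y hp hy
  rw [MC, colW_eq p r a hr, colW_succ p r a hr, colW_eq p s b hs, colW_succ p s b hs,
    label_eq p r a hr, label_eq p s b hs]
  constructor
  · rintro ⟨l, h1, h2, h⟩
    by_cases c1 : r < p <;> by_cases c2 : s < p <;> simp [c1, c2] at h <;> split_ifs <;> omega
  · intro h
    by_cases c1 : r < p <;> by_cases c2 : s < p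
    · split_ifs at h <;> omega
    · refine ⟨r + 1, by omega, by omega, ?_⟩
      simp [c1, c2]
      split_ifs at h <;> omega
    · refine ⟨s + 1, by omega, by omega, ?_⟩
      simp [c1, c2]
      split_ifs at h <;> omega
    · split_ifs at h <;> omega

theorem label_col (p x l : ℕ) (hp : 1 ≤ p) (hx : 1 ≤ x) :
    (labelW p 0 x = (l + 2, false) ∨ labelW p 0 x = (l + 1, true)) ↔ colW p x = l + 1 := by
  obtain ⟨r, a, hr, rfl⟩ := exists_rep p x hp hx
  rw [colW_eq p r a hr, label_eq p r a hr]
  by_cases c1 : r < p <;> simp [c1] <;> split_ifs <;> omega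

theorem NCset_eq (p k : ℕ) (hp : 1 ≤ p) :
    NCset p 0 k = GP (MC (colW p)) 1 (1 + 2 * p * k) := by
  classical
  ext π
  rw [mem_GP]
  simp only [NCset, Finset.mem_filter, Finset.mem_powerset]
  constructor
  · rintro ⟨-, ⟨h1, h2, h3, h4⟩, h5⟩
    refine ⟨?_, ?_, h3, h4, ?_⟩
    · intro b hb; have := h1 b hb; omega
    · intro x hx hx'; exact h2 x hx (by omega)
    · intro b hb
      have := h1 b hb
      exact (label_match p b.1 b.2 hp (by omega) (by omega)).1 (h5 b hb)
  · rintro ⟨h1, h2, h3, h4, h5⟩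
    refine ⟨?_, ⟨?_, ?_, h3, h4⟩, ?_⟩
    · intro b hb; have := h1 b hb
      simp only [Finset.mem_product, Finset.mem_Icc]; omega
    · intro b hb; have := h1 b hb; omega
    · intro x hx hx'; exact h2 x hx (by omega)
    · intro b hb
      have := h1 b hb
      exact (label_match p b.1 b.2 hp (by omega) (by omega)).2 (h5 b hb)

/-- weights extended to all colours -/
noncomputable def TW (p : ℕ) (t : Fin p → ℝ) (v : ℕ) : ℝ :=
  ∏ l : Fin p, if v = (l : ℕ) + 1 then t l else 1

theorem TW_zero (p t) : TW p t 0 = 1 := by simp [TW]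

theorem TW_succ (p t) (l : Fin p) : TW p t (l + 1) = t l := by
  simp only [TW]
  rw [Finset.prod_eq_single l]
  · simp
  · intro b _ hb
    rw [if_neg]
    intro h; apply hb; ext; omega
  · simp

theorem weight_eq (p k : ℕ) (hp : 1 ≤ p) (t : Fin p → ℝ) (π : Finset (ℕ × ℕ))
    (h : π ∈ GP (MC (colW p)) 1 (1 + 2 * p * k)) :
    ∏ l : Fin p, t l ^ jstat p 0 π ((l : ℕ) + 1) = ∏ b ∈ π, TW p t (colW p b.2) := by
  rw [mem_GP] at h
  simp only [TW]
  rw [Finset.prod_comm]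
  apply Finset.prod_congr rfl
  intro l _
  rw [Finset.prod_ite]
  simp only [Finset.prod_const, Finset.prod_const_one, one_pow, mul_one]
  congr 1
  rw [jstat, ← Finset.card_union_of_disjoint, ← Finset.filter_or]
  · congr 1
    apply Finset.filter_congr
    intro b hb
    have := h.1 b hb
    exact label_col p b.2 l hp (by omega)
  · rw [Finset.disjoint_left]
    intro b hb hb'
    simp only [Finset.mem_filter] at hb hb'
    rw [hb.2] at hb'
    simp at hb'

theorem P_eq_SP (p k : ℕ) (hp : 1 ≤ p) (t : Fin p → ℝ) :
    ∑ π ∈ NCset p 0 k, ∏ l : Fin p, t l ^ jstat p 0 π ((l : ℕ) + 1) =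
    SP (MC (colW p)) (fun x => TW p t (colW p x)) 1 (1 + 2 * p * k) := by
  rw [NCset_eq p k hp, SP]
  exact Finset.sum_congr rfl (fun π hπ => weight_eq p k hp t π hπ)

/-- excursions from the descending position of colour `l` -/
noncomputable def EE (p : ℕ) (T : ℕ → ℝ) (l q : ℕ) : ℝ :=
  SP (MC (colW p)) (fun x => T (colW p x)) (1 + (2 * p - l)) (1 + (2 * p - l) + 2 * p * q)

/-- words from the ascending to the descending position of colour `l` -/
noncomputable def XX (p : ℕ) (T : ℕ → ℝ) (l q : ℕ) : ℝ :=
  SP (MC (colW p)) (fun x => T (colW p x)) (1 + l) (1 + (2 * p - l) + 2 * p * q)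

theorem MC_period (p x y : ℕ) (hp : 1 ≤ p) :
    MC (colW p) (x + 2 * p) (y + 2 * p) ↔ MC (colW p) x y := by
  have e : ∀ z, z + 2 * p + 1 = z + 1 + 2 * p := by intro z; omega
  simp only [MC, e, colW_period p _ hp]

theorem XX_p (p : ℕ) (T q) : XX p T p q = EE p T p q := by
  have : 2 * p - p = p := by omega
  rw [XX, EE, this]

theorem XX_rec (p : ℕ) (hp : 1 ≤ p) (T : ℕ → ℝ) (l q : ℕ) (hl : l < p) :
    XX p T l q = ∑ a ∈ Finset.range (q+1), T (l+1) * (XX p T (l+1) a * EE p T l (q - a)) := by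
  classical
  rw [XX, SP_rec _ _ _ _ (by omega)]
  simp only [ite_mul, zero_mul]
  rw [← Finset.sum_filter]
  have hset : (Finset.Ico (1 + l + 1) (1 + (2 * p - l) + 2 * p * q)).filter
      (fun m => MC (colW p) (1 + l) m) =
      (Finset.range (q+1)).image (fun a => 1 + (2 * p - (l + 1)) + 2 * p * a) := by
    have c1 : colW p (1 + l) = l := by
      have := colW_eq p l 0 (by omega)
      simp only [mul_zero, add_zero] at this
      rw [this]; split_ifs <;> omega
    have c2 : colW p (1 + l + 1) = l + 1 := by
      have := colW_succ p l 0 (by omega)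
      simp only [mul_zero, add_zero] at this
      rw [this]; split_ifs; omega
    ext m
    simp only [Finset.mem_filter, Finset.mem_Ico, Finset.mem_image, Finset.mem_range, MC, c1, c2]
    constructor
    · rintro ⟨⟨h1, h2⟩, h3, h4⟩
      obtain ⟨r, a, hr, rfl⟩ := exists_rep p m hp (by omega)
      rw [colW_eq p r a hr] at h4
      rw [colW_succ p r a hr] at h3
      have hr' : r = 2 * p - (l + 1) := by split_ifs at h3 h4 <;> omega
      subst hr'
      refine ⟨a, ?_, rfl⟩
      by_contra hcon
      have := Nat.mul_le_mul_left (2 * p) (show q + 1 ≤ a by omega)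
      rw [Nat.mul_add] at this
      omega
    · rintro ⟨a, ha, rfl⟩
      rw [colW_eq p _ a (by omega), colW_succ p _ a (by omega)]
      have := Nat.mul_le_mul_left (2 * p) (show a ≤ q by omega)
      refine ⟨by omega, ?_, ?_⟩ <;> split_ifs <;> omega
  rw [hset, Finset.sum_image]
  · apply Finset.sum_congr rfl
    intro a ha
    simp only [Finset.mem_range] at ha
    have c3 : colW p (1 + (2 * p - (l + 1)) + 2 * p * a) = l + 1 := by
      rw [colW_eq p _ a (by omega)]; split_ifs <;> omega
    simp only [c3]
    congr 2
    have e1 : 1 + (2 * p - (l + 1)) + 2 * p * a + 1 = 1 + (2 * p - l) + 2 * p * a := by omega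
    have e2 : 1 + (2 * p - l) + 2 * p * q = 1 + (2 * p - l) + 2 * p * (q - a) + 2 * p * a := by
      rw [add_assoc (1 + (2 * p - l)), ← Nat.mul_add, Nat.sub_add_cancel (by omega)]
    rw [e1, e2, EE]
    exact SP_shift' _ _ (2 * p) (fun x y => MC_period p x y hp)
      (fun x => by simp only [colW_period p x hp]) a _ _ (by omega)
  · intro a _ b _ hab
    simp only at hab
    have : 2 * p * a = 2 * p * b := by omega
    exact Nat.eq_of_mul_eq_mul_left (by omega) this

theorem XX_series (p : ℕ) (hp : 1 ≤ p) (T : ℕ → ℝ) (l : ℕ) (hl : l < p) :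
    PowerSeries.mk (XX p T l) = PowerSeries.C (T (l+1)) * PowerSeries.mk (XX p T (l+1)) *
      PowerSeries.mk (EE p T l) := by
  ext q
  rw [mul_assoc, PowerSeries.coeff_C_mul, PowerSeries.coeff_mul,
    Finset.Nat.sum_antidiagonal_eq_sum_range_succ_mk, PowerSeries.coeff_mk, XX_rec p hp T l q hl,
    Finset.mul_sum]
  simp

theorem XX_prod (p : ℕ) (hp : 1 ≤ p) (T : ℕ → ℝ) (d : ℕ) : ∀ l, l + d = p →
    PowerSeries.C (T l) * PowerSeries.mk (XX p T l) =
      ∏ i ∈ Finset.Ico l (p+1), (PowerSeries.C (T i) * PowerSeries.mk (EE p T i)) := by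
  induction d with
  | zero =>
    intro l hl
    obtain rfl : l = p := by omega
    simp only [Nat.Ico_succ_singleton, Finset.prod_singleton]
    congr 2
    ext q; exact XX_p l T q
  | succ d ih =>
    intro l hl
    rw [Finset.prod_eq_prod_Ico_succ_bot (by omega), ← ih (l+1) (by omega),
      XX_series p hp T l (by omega)]
    ring

theorem EE_series (p : ℕ) (hp : 1 ≤ p) (T : ℕ → ℝ) (hT : T 0 = 1) (l : ℕ) (hl : l ≤ p) :
    PowerSeries.C (T l) * PowerSeries.mk (EE p T l) =
      PowerSeries.C (T l) + PowerSeries.X * PowerSeries.mk (XX p T 0) := by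
  ext q
  rcases q with _ | q
  · simp [EE, SP_self]
  · rw [PowerSeries.coeff_C_mul, map_add, PowerSeries.coeff_succ_X_mul, PowerSeries.coeff_mk,
      PowerSeries.coeff_mk, PowerSeries.coeff_C]
    simp only [Nat.succ_ne_zero, if_false, zero_add]
    have hn : 1 ≤ 2 * p * (q + 1) := Nat.mul_pos (by omega) (by omega)
    have := SP_rotate_to (colW p) T (2 * p * (q+1)) hn
      (fun x => colW_period' p x (q+1) hp) 1 (2 * p - l)
    have c0 : colW p 1 = 0 := by
      have := colW_eq p 0 0 (by omega)
      simpa using this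
    have c1 : colW p (1 + (2 * p - l)) = l := by
      rcases Nat.eq_zero_or_pos l with rfl | h
      · have := colW_eq p 0 1 (by omega)
        simpa using this
      · have := colW_eq p (2 * p - l) 0 (by omega)
        simp only [mul_zero, add_zero] at this
        rw [this]; split_ifs <;> omega
    rw [c0, c1, hT, one_mul] at this
    rw [EE, ← this, XX]
    congr 1
    rw [Nat.mul_add]; omega

theorem B_eq (p : ℕ) (hp : 1 ≤ p) (T : ℕ → ℝ) (hT : T 0 = 1) :
    PowerSeries.X * PowerSeries.mk (XX p T 0) = PowerSeries.X *
      Polynomial.aeval (PowerSeries.X * PowerSeries.mk (XX p T 0) : PowerSeries ℝ)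
        (∏ l : Fin (p+1), (Polynomial.C (T l) + Polynomial.X) : Polynomial ℝ) := by
  congr 1
  have h := XX_prod p hp T p 0 (by omega)
  rw [hT, map_one, one_mul] at h
  conv_lhs => rw [h]
  rw [map_prod, Finset.prod_congr rfl (fun i hi => EE_series p hp T hT i
    (by simp only [Finset.mem_Ico] at hi; omega)), ← Finset.range_eq_Ico, Finset.prod_range]
  apply Finset.prod_congr rfl
  intro i _
  rw [map_add, Polynomial.aeval_C, Polynomial.aeval_X]
  rfl

/-- Corollary 4.1: the multivariate Fuss–Narayana polynomial
`F_k(t₁, …, t_p) = Σ (1/k) ∏ᵢ C(k, jᵢ) · t₁^{j₁} ⋯ t_p^{j_p}` (sum over tuples of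
positive integers with `j₀ + ⋯ + j_p = pk + 1`) equals `P_k(1, t₁, …, t_p)`, i.e.
`Σ_{π ∈ NC²₂ₚₖ(W₀ᵏ)} t₁^{j₁(π)} ⋯ t_p^{j_p(π)}`. -/
theorem F_eq_P_one (p k : ℕ) (hp : 1 ≤ p) (hk : 1 ≤ k) (t : Fin p → ℝ) :
    (∑ j ∈ (Finset.Nat.antidiagonalTuple (p + 1) (p * k + 1)).filter
        (fun j => ∀ l, 1 ≤ j l),
      (1 / (k : ℝ)) * (∏ i, (Nat.choose k (j i) : ℝ)) *
        ∏ l : Fin p, t l ^ j l.succ) =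
      ∑ π ∈ NCset p 0 k, ∏ l : Fin p, t l ^ jstat p 0 π ((l : ℕ) + 1) := by
  set T := TW p t with hTdef
  have hT : T 0 = 1 := TW_zero p t
  have hL := lagr _ _ (B_eq p hp T hT) k 1 le_rfl hk
  rw [lagr_coeff p k (fun l => T l) hk, pow_one, Nat.cast_one, one_mul] at hL
  rw [P_eq_SP p k hp t]
  have hX : PowerSeries.coeff k (PowerSeries.X * PowerSeries.mk (XX p T 0)) =
      SP (MC (colW p)) (fun x => TW p t (colW p x)) 1 (1 + 2 * p * k) := by
    obtain ⟨k, rfl⟩ : ∃ k', k = k' + 1 := ⟨k - 1, by omega⟩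
    rw [PowerSeries.coeff_succ_X_mul, PowerSeries.coeff_mk, XX]
    congr 1
    rw [Nat.mul_add]; omega
  rw [← hX]
  have hk0 : (k : ℝ) ≠ 0 := by positivity
  apply mul_left_cancel₀ hk0
  rw [hL, Finset.mul_sum]
  apply Finset.sum_congr rfl
  intro j _
  rw [Finset.prod_mul_distrib, Fin.prod_univ_succ (fun i => T (i : ℕ) ^ j i)]
  simp only [Fin.val_zero, Fin.val_succ, hTdef, TW_zero, one_pow, one_mul, TW_succ]
  field_simp
end

section
/- For all integers p ≥ 1, k ≥ 1 and every i ∈ {1,...,p}, every noncrossing pair partition π of {1,...,2pk} adapted to W_i^k satisfies j_0(π) ≥ 1. -/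
/-- For `p, k ≥ 1` and `i ∈ {1, …, p}`, every noncrossing pair partition of
`{1, …, 2pk}` adapted to `Wᵢᵏ` satisfies `j₀(π) ≥ 1`. -/
theorem jstat_zero_pos (p k i : ℕ) (hp : 1 ≤ p) (hk : 1 ≤ k)
    (hi1 : 1 ≤ i) (hip : i ≤ p) (π : Finset (ℕ × ℕ))
    (hπ : AdaptedNCPP p i k π) :
    1 ≤ jstat p i π 0 := by
  have hlab : ∀ m, 1 ≤ m → m ≤ i → labelW p i m = (i + 1 - m, true) := by
    intro m h1 h2
    unfold labelW letter0
    rw [Nat.mod_eq_of_lt (by omega), if_neg (by omega)]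
    congr 1
    omega
  obtain ⟨⟨hb, hcov, -, -⟩, had⟩ := hπ
  have hik : i ≤ 2 * p * k := by nlinarith
  obtain ⟨b, hbπ, hx⟩ := hcov i hi1 hik
  obtain ⟨hb1, hb2, hlt⟩ := hb b hbπ
  obtain ⟨l, hl1, hlp, h⟩ := had b hbπ
  have hii := hlab i hi1 le_rfl
  have h1 := hlab b.1 hb1 (by omega)
  have hright : labelW p i b.2 = (0 + 1, false) := by
    rcases h with ⟨h, -⟩ | ⟨h, h'⟩
    · rw [h1] at h
      simp at h
    · rcases hx with hx | hx
      · rw [h1] at h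
        simp only [Prod.mk.injEq, and_true] at h
        rw [h']
        congr 1
        omega
      · rw [← hx, hii] at h'
        simp at h'
  unfold jstat
  have : 0 < (π.filter fun b => labelW p i b.2 = (0 + 1, false)).card :=
    Finset.card_pos.mpr ⟨b, Finset.mem_filter.mpr ⟨hbπ, hright⟩⟩
  omega
end

section
/- For all integers p ≥ 1, k ≥ 1 and every i ∈ {1,...,p}, every noncrossing pair partition π of {1,...,2pk} adapted to W_0^k satisfies j_i(π) ≥ 1. -/
lemma labelW_zero_eq (p q s : ℕ) (hs : s < 2 * p) :
    labelW p 0 (2 * p * q + s + 1) = letter0 p (s + 1) := by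
  unfold labelW
  have h : (2 * p * q + s + 1 - 1 + (2 * p - 0)) = s + 2 * p * (q + 1) := by
    rw [Nat.mul_succ]; omega
  rw [h, Nat.add_mul_mod_self_left, Nat.mod_eq_of_lt hs]

/-- For `p, k ≥ 1` and `i ∈ {1, …, p}`, every noncrossing pair partition of
`{1, …, 2pk}` adapted to `W₀ᵏ` satisfies `jᵢ(π) ≥ 1`. -/
theorem jstat_pos (p k i : ℕ) (hp : 1 ≤ p) (hk : 1 ≤ k)
    (hi1 : 1 ≤ i) (hip : i ≤ p) (π : Finset (ℕ × ℕ))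
    (hπ : AdaptedNCPP p 0 k π) :
    1 ≤ jstat p 0 π i := by
  obtain ⟨⟨h1, h2, -, -⟩, h5⟩ := hπ
  obtain ⟨q, rfl⟩ : ∃ q, k = q + 1 := ⟨k - 1, by omega⟩
  have hm : 2 * p * (q + 1) = 2 * p * q + 2 * p := Nat.mul_succ _ _
  -- all of the last `p` positions are starred
  have key : ∀ s, p ≤ s → s < 2 * p →
      labelW p 0 (2 * p * q + s + 1) = (2 * p - s, true) := by
    intro s h h'
    rw [labelW_zero_eq p q s h', letter0, if_neg (by omega)]
    congr 1
    omega
  obtain ⟨b, hb, hx⟩ := h2 (2 * p * q + (2 * p - i) + 1) (by omega) (by omega)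
  have hl := key (2 * p - i) (by omega) (by omega)
  rw [show 2 * p - (2 * p - i) = i by omega] at hl
  rcases hx with hx | hx
  · exfalso
    obtain ⟨_, hb2, hlt⟩ := h1 b hb
    obtain ⟨s, hs⟩ : ∃ s, b.2 = 2 * p * q + s + 1 := ⟨b.2 - 2 * p * q - 1, by omega⟩
    have hk2 := key s (by omega) (by omega)
    obtain ⟨l, _, _, ⟨ha, _⟩ | ⟨_, hc⟩⟩ := h5 b hb
    · rw [← hx, hl] at ha
      simp at ha
    · rw [hs, hk2] at hc
      simp at hc
  · have : 0 < (π.filter fun b => labelW p 0 b.2 = (i, true)).card :=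
      Finset.card_pos.mpr ⟨b, Finset.mem_filter.mpr ⟨hb, by rw [← hx, hl]⟩⟩
    unfold jstat
    omega
end

section
/- For all integers k ≥ 1 and 1 ≤ j ≤ k, the number of noncrossing pair partitions of {1,...,2k} having exactly j right legs at even positions equals the Narayana number (1/k)·C(k, j)·C(k, j−1); equivalently, k times this count equals C(k, j)·C(k, j−1). (This is the case p = 1 of the enumeration of adapted noncrossing pair partitions by right-leg statistics.) -/
open Classical in
/-- The finset of all noncrossing pair partitions of `{1, …, m}`. -/
noncomputable def NCPPset (m : ℕ) : Finset (Finset (ℕ × ℕ)) :=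
  (Finset.Icc 1 m ×ˢ Finset.Icc 1 m).powerset.filter (IsNCPP m)

/-- partial noncrossing pairings of `{1..m}` with open points `S` -/
def QP (m : ℕ) (π : Finset (ℕ × ℕ)) (S : Finset ℕ) : Prop :=
  (∀ b ∈ π, 1 ≤ b.1 ∧ b.2 ≤ m ∧ b.1 < b.2) ∧
  (∀ s ∈ S, 1 ≤ s ∧ s ≤ m) ∧
  (∀ x, 1 ≤ x → x ≤ m → x ∈ S ∨ ∃ b ∈ π, x = b.1 ∨ x = b.2) ∧
  (∀ b ∈ π, ∀ c ∈ π, (b.1 = c.1 ∨ b.1 = c.2 ∨ b.2 = c.1 ∨ b.2 = c.2) → b = c) ∧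
  (∀ b ∈ π, ∀ c ∈ π, ¬(b.1 < c.1 ∧ c.1 < b.2 ∧ b.2 < c.2)) ∧
  (∀ b ∈ π, ∀ s ∈ S, s < b.1 ∨ b.2 < s)

open Classical in
noncomputable def QS (m : ℕ) : Finset (Finset (ℕ × ℕ) × Finset ℕ) :=
  ((Finset.Icc 1 m ×ˢ Finset.Icc 1 m).powerset ×ˢ (Finset.Icc 1 m).powerset).filter
    (fun p => QP m p.1 p.2)

theorem mem_QS (m : ℕ) (p : Finset (ℕ × ℕ) × Finset ℕ) : p ∈ QS m ↔ QP m p.1 p.2 := by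
  unfold QS
  simp only [Finset.mem_filter, Finset.mem_product, Finset.mem_powerset, and_iff_right_iff_imp]
  rintro ⟨h1, h2, -⟩
  refine ⟨fun b hb => ?_, fun s hs => ?_⟩
  · have := h1 b hb
    simp only [Finset.mem_product, Finset.mem_Icc]
    omega
  · simpa using h2 s hs

def evLegs (π : Finset (ℕ × ℕ)) : ℕ := (π.filter fun b => Even b.2).card

noncomputable def QF (m : ℕ) (s e : ℤ) : Finset (Finset (ℕ × ℕ) × Finset ℕ) :=
  (QS m).filter (fun p => (p.2.card : ℤ) = s ∧ (evLegs p.1 : ℤ) = e)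

theorem mem_QF (m : ℕ) (s e : ℤ) (p : Finset (ℕ × ℕ) × Finset ℕ) :
    p ∈ QF m s e ↔ QP m p.1 p.2 ∧ (p.2.card : ℤ) = s ∧ (evLegs p.1 : ℤ) = e := by
  simp [QF, mem_QS]

def upMap (m : ℕ) (p : Finset (ℕ × ℕ) × Finset ℕ) : Finset (ℕ × ℕ) × Finset ℕ :=
  (p.1, insert (m + 1) p.2)

def downMap (m : ℕ) (p : Finset (ℕ × ℕ) × Finset ℕ) : Finset (ℕ × ℕ) × Finset ℕ :=
  (insert (p.2.sup id, m + 1) p.1, p.2.erase (p.2.sup id))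

theorem sup_mem' (S : Finset ℕ) (h : S.Nonempty) : S.sup id ∈ S := by
  obtain ⟨x, hx, h⟩ := Finset.exists_mem_eq_sup S h id
  rw [h]; exact hx

theorem le_sup' (S : Finset ℕ) (x : ℕ) (h : x ∈ S) : x ≤ S.sup id :=
  Finset.le_sup (f := id) h

theorem QP_up (m : ℕ) (π S) (h : QP m π S) : QP (m + 1) π (insert (m + 1) S) := by
  obtain ⟨h1, h2, h3, h4, h5, h6⟩ := h
  refine ⟨?_, ?_, ?_, h4, h5, ?_⟩ <;> grind

theorem QP_up_inv (m : ℕ) (π S) (h : QP (m + 1) π S) (hm : m + 1 ∈ S) :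
    QP m π (S.erase (m + 1)) := by
  obtain ⟨h1, h2, h3, h4, h5, h6⟩ := h
  refine ⟨?_, ?_, ?_, h4, h5, ?_⟩ <;> grind

theorem QP_down (m : ℕ) (π S) (x : ℕ) (h : QP m π S) (hx : x ∈ S) (hmax : ∀ y ∈ S, y ≤ x) :
    QP (m + 1) (insert (x, m + 1) π) (S.erase x) := by
  obtain ⟨h1, h2, h3, h4, h5, h6⟩ := h
  have hx2 := h2 x hx
  refine ⟨?_, ?_, ?_, ?_, ?_, ?_⟩
  · grind
  · grind
  · intro y hy1 hy2
    by_cases hy : y = m + 1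
    · exact Or.inr ⟨(x, m + 1), by simp, Or.inr hy⟩
    by_cases hyx : y = x
    · exact Or.inr ⟨(x, m + 1), by simp, Or.inl hyx⟩
    rcases h3 y hy1 (by omega) with h | ⟨b, hb, h⟩
    · left; simp [h, hyx]
    · right; exact ⟨b, by simp [hb], h⟩
  · have key : ∀ b ∈ π, b.1 ≠ x ∧ b.2 ≠ x ∧ b.1 ≠ m + 1 ∧ b.2 ≠ m + 1 := by
      intro b hb
      have := h1 b hb
      have := h6 b hb x hx
      omega
    intro b hb c hc hbc
    rw [Finset.mem_insert] at hb hc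
    rcases hb with rfl | hb <;> rcases hc with rfl | hc
    · rfl
    · have := key c hc
      simp only at hbc
      omega
    · have := key b hb
      simp only at hbc
      omega
    · exact h4 b hb c hc hbc
  · intro b hb c hc
    rw [Finset.mem_insert] at hb hc
    rcases hb with rfl | hb <;> rcases hc with rfl | hc
    · simp
    · have := h1 c hc
      simp only
      omega
    · have := h6 b hb x hx
      have := h1 b hb
      simp only
      omega
    · exact h5 b hb c hc
  · intro b hb s hs
    rw [Finset.mem_insert] at hb
    rw [Finset.mem_erase] at hs
    rcases hb with rfl | hb
    · have := hmax s hs.2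
      have := hs.1
      simp only
      omega
    · exact h6 b hb s hs.2

theorem QP_down_inv (m : ℕ) (π S) (b : ℕ × ℕ) (h : QP (m + 1) π S) (hb : b ∈ π)
    (hb2 : b.2 = m + 1) :
    QP m (π.erase b) (insert b.1 S) ∧ b.1 ∉ S ∧ (∀ y ∈ S, y ≤ b.1) := by
  obtain ⟨h1, h2, h3, h4, h5, h6⟩ := h
  have hbb := h1 b hb
  have hmax : ∀ y ∈ S, y < b.1 := by
    intro y hy
    have := h6 b hb y hy
    have := h2 y hy
    omega
  have key : ∀ c ∈ π.erase b, c ∈ π ∧ c.1 ≠ b.1 ∧ c.1 ≠ b.2 ∧ c.2 ≠ b.1 ∧ c.2 ≠ b.2 := by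
    intro c hc
    rw [Finset.mem_erase] at hc
    have := h4 c hc.2 b hb
    grind
  refine ⟨⟨?_, ?_, ?_, ?_, ?_, ?_⟩, ?_, fun y hy => (hmax y hy).le⟩
  · intro c hc
    have := key c hc
    have := h1 c this.1
    omega
  · intro s hs
    rw [Finset.mem_insert] at hs
    rcases hs with rfl | hs
    · omega
    · have := h2 s hs
      have := hmax s hs
      omega
  · intro x hx1 hx2
    rcases h3 x hx1 (by omega) with h | ⟨c, hc, h⟩
    · left; simp [h]
    · by_cases hcb : c = b
      · subst hcb
        left
        rw [Finset.mem_insert]; left; omega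
      · right; exact ⟨c, by simp [hc, hcb], h⟩
  · intro c hc d hd
    exact h4 c (key c hc).1 d (key d hd).1
  · intro c hc d hd
    exact h5 c (key c hc).1 d (key d hd).1
  · intro c hc s hs
    have k := key c hc
    rw [Finset.mem_insert] at hs
    rcases hs with rfl | hs
    · have := h5 c k.1 b hb
      have := h1 c k.1
      omega
    · exact h6 c k.1 s hs
  · intro hh
    exact lt_irrefl _ (hmax _ hh)

def par (m : ℕ) : ℤ := if Even m then 1 else 0

theorem evLegs_insert (m x : ℕ) (π : Finset (ℕ × ℕ)) (h : (x, m) ∉ π) :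
    (evLegs (insert (x, m) π) : ℤ) = evLegs π + par m := by
  unfold evLegs par
  rw [Finset.filter_insert]
  split_ifs with hm
  · rw [Finset.card_insert_of_notMem (by simp [h])]
    push_cast; rfl
  · simp

theorem QF_succ (m : ℕ) (s e : ℤ) (hs : 0 ≤ s) :
    QF (m + 1) s e = (QF m (s - 1) e).image (upMap m) ∪
      (QF m (s + 1) (e - par (m + 1))).image (downMap m) := by
  ext ⟨π, S⟩
  simp only [Finset.mem_union, Finset.mem_image, mem_QF]
  constructor
  · rintro ⟨h, hS, he⟩
    by_cases hm : m + 1 ∈ S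
    · left
      refine ⟨(π, S.erase (m + 1)), ⟨QP_up_inv m π S h hm, ?_, he⟩, ?_⟩
      · have := Finset.card_erase_add_one hm
        simp only
        omega
      · simp [upMap, Finset.insert_erase hm]
    · right
      obtain ⟨b, hb, hb2⟩ : ∃ b ∈ π, b.2 = m + 1 := by
        rcases h.2.2.1 (m + 1) (by omega) le_rfl with h' | ⟨b, hb, h'⟩
        · exact absurd h' hm
        · have := h.1 b hb
          exact ⟨b, hb, by omega⟩
      obtain ⟨hq, hn, hmax⟩ := QP_down_inv m π S b h hb hb2
      have hsup : (insert b.1 S).sup id = b.1 := by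
        apply le_antisymm
        · apply Finset.sup_le
          intro y hy
          rw [Finset.mem_insert] at hy
          rcases hy with rfl | hy
          · exact le_rfl
          · exact hmax y hy
        · exact le_sup' _ _ (Finset.mem_insert_self _ _)
      have hbe : (b.1, m + 1) = b := by rw [← hb2]
      refine ⟨(π.erase b, insert b.1 S), ⟨hq, ?_, ?_⟩, ?_⟩
      · simp only
        rw [Finset.card_insert_of_notMem hn]
        push_cast; omega
      · have := evLegs_insert (m + 1) b.1 (π.erase b) (by rw [hbe]; simp)
        rw [hbe, Finset.insert_erase hb] at this
        simp only
        omega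
      · unfold downMap
        simp only [hsup, hbe, Finset.insert_erase hb, Finset.erase_insert hn]
  · rintro (⟨⟨π', S'⟩, ⟨h, hS, he⟩, hh⟩ | ⟨⟨π', S'⟩, ⟨h, hS, he⟩, hh⟩)
    · simp only [upMap, Prod.mk.injEq] at h hS he hh
      obtain ⟨rfl, rfl⟩ := hh
      refine ⟨QP_up m _ _ h, ?_, he⟩
      have : m + 1 ∉ S' := fun hm => by have := h.2.1 _ hm; omega
      rw [Finset.card_insert_of_notMem this]
      push_cast; omega
    · simp only [downMap, Prod.mk.injEq] at h hS he hh
      obtain ⟨rfl, rfl⟩ := hh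
      have hne : S'.Nonempty := by
        rw [← Finset.card_pos]; omega
      have hx := sup_mem' S' hne
      refine ⟨QP_down m _ _ _ h hx (le_sup' S'), ?_, ?_⟩
      · have := Finset.card_erase_add_one hx
        omega
      · rw [evLegs_insert]
        · omega
        · intro hm
          have := h.1 _ hm
          simp only at this
          omega

theorem QF_card_succ (m : ℕ) (s e : ℤ) (hs : 0 ≤ s) :
    (QF (m + 1) s e).card = (QF m (s - 1) e).card +
      (QF m (s + 1) (e - par (m + 1))).card := by
  rw [QF_succ m s e hs, Finset.card_union_of_disjoint, Finset.card_image_of_injOn,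
    Finset.card_image_of_injOn]
  · rintro ⟨π, S⟩ h ⟨π', S'⟩ h' hh
    rw [Finset.mem_coe, mem_QF] at h h'
    simp only [downMap, Prod.mk.injEq] at h h' hh
    have hx := sup_mem' S (by rw [← Finset.card_pos]; omega)
    have hx' := sup_mem' S' (by rw [← Finset.card_pos]; omega)
    have n : ∀ x, (x, m + 1) ∉ π := fun x hm => by
      have := h.1.1 _ hm
      simp only at this
      omega
    have n' : ∀ x, (x, m + 1) ∉ π' := fun x hm => by
      have := h'.1.1 _ hm
      simp only at this
      omega
    obtain ⟨e1, e2⟩ := hh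
    have hxx : S.sup id = S'.sup id := by
      have : (S.sup id, m + 1) ∈ insert (S'.sup id, m + 1) π' := by
        rw [← e1]; exact Finset.mem_insert_self _ _
      rw [Finset.mem_insert] at this
      rcases this with h | h
      · exact (Prod.mk.inj h).1
      · exact absurd h (n' _)
    rw [← hxx] at e1 e2 hx'
    have e3 : π = π' := by
      rw [← Finset.erase_insert (n (S.sup id)), e1, Finset.erase_insert (n' _)]
    have e4 : S = S' := by
      rw [← Finset.insert_erase hx, e2, Finset.insert_erase hx']
    rw [e3, e4]
  · rintro ⟨π, S⟩ h ⟨π', S'⟩ h' hh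
    rw [Finset.mem_coe, mem_QF] at h h'
    simp only [upMap, Prod.mk.injEq] at h h' hh
    have n : m + 1 ∉ S := fun hm => by have := h.1.2.1 _ hm; omega
    have n' : m + 1 ∉ S' := fun hm => by have := h'.1.2.1 _ hm; omega
    obtain ⟨e1, e2⟩ := hh
    have e4 : S = S' := by
      rw [← Finset.erase_insert n, e2, Finset.erase_insert n']
    rw [e1, e4]
  · rw [Finset.disjoint_left]
    intro p hp hq
    simp only [Finset.mem_image, mem_QF] at hp hq
    obtain ⟨⟨π, S⟩, h, rfl⟩ := hp
    obtain ⟨⟨π', S'⟩, h', hh⟩ := hq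
    simp only [upMap, downMap, Prod.mk.injEq] at h h' hh
    have : m + 1 ∈ S'.erase (S'.sup id) := by
      rw [hh.2]; exact Finset.mem_insert_self _ _
    have := h'.1.2.1 _ (Finset.mem_of_mem_erase this)
    omega

theorem QF_neg (m : ℕ) (s e : ℤ) (hs : s < 0) : (QF m s e).card = 0 := by
  rw [Finset.card_eq_zero, Finset.eq_empty_iff_forall_notMem]
  intro p hp
  rw [mem_QF] at hp
  omega

theorem QF_zero (s e : ℤ) : (QF 0 s e).card = if s = 0 ∧ e = 0 then 1 else 0 := by
  have key : ∀ p, p ∈ QF 0 s e ↔ p = (∅, ∅) ∧ s = 0 ∧ e = 0 := by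
    rintro ⟨π, S⟩
    rw [mem_QF]
    constructor
    · rintro ⟨⟨h1, h2, -⟩, h3, h4⟩
      simp only at h1 h2 h3 h4
      have e1 : π = ∅ := Finset.eq_empty_iff_forall_notMem.2 fun b hb => by
        have := h1 b hb; omega
      have e2 : S = ∅ := Finset.eq_empty_iff_forall_notMem.2 fun b hb => by
        have := h2 b hb; omega
      subst e1 e2
      simp [evLegs] at h3 h4
      exact ⟨rfl, h3.symm, h4.symm⟩
    · rintro ⟨h, rfl, rfl⟩
      obtain ⟨rfl, rfl⟩ := Prod.mk.inj h
      refine ⟨⟨?_, ?_, ?_, ?_, ?_, ?_⟩, ?_, ?_⟩ <;> simp [evLegs]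
      omega
  split_ifs with h
  · rw [Finset.card_eq_one]
    exact ⟨(∅, ∅), by ext p; rw [key]; simp [h]⟩
  · rw [Finset.card_eq_zero, Finset.eq_empty_iff_forall_notMem]
    intro p hp
    exact h ((key p).1 hp).2

/-- binomial with integer lower index -/
def zch (n : ℕ) (k : ℤ) : ℤ := if k < 0 then 0 else (n.choose k.toNat : ℤ)

theorem zch_nat (n k : ℕ) : zch n k = n.choose k := by simp [zch]

theorem zch_succ (n : ℕ) (k : ℤ) : zch (n + 1) k = zch n k + zch n (k - 1) := by
  rcases lt_trichotomy k 0 with h | rfl | h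
  · simp [zch, h, show k - 1 < 0 by omega]
  · simp [zch]
  · obtain ⟨l, rfl⟩ : ∃ l : ℕ, k = (l + 1 : ℕ) := ⟨(k - 1).toNat, by omega⟩
    have : ((l + 1 : ℕ) : ℤ) - 1 = (l : ℕ) := by push_cast; ring
    rw [this, zch_nat, zch_nat, zch_nat, Nat.choose_succ_succ]
    push_cast; ring

theorem zch_zero (k : ℤ) : zch 0 k = if k = 0 then 1 else 0 := by
  rcases lt_trichotomy k 0 with h | rfl | h
  · simp [zch, h, h.ne]
  · simp [zch]
  · obtain ⟨l, rfl⟩ : ∃ l : ℕ, k = (l + 1 : ℕ) := ⟨(k - 1).toNat, by omega⟩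
    rw [zch_nat, if_neg (by omega)]; simp

theorem QF_closed (n : ℕ) : ∀ d e : ℤ, -1 ≤ d →
    ((QF (2 * n + 1) (2 * d + 1) e).card : ℤ) =
      zch n (n - e - d) * zch n (n - e) - zch n (n - e - d - 1) * zch n (n - e + 1) := by
  induction n with
  | zero =>
    intro d e hd
    rcases eq_or_lt_of_le hd with rfl | hd
    · rw [QF_neg _ _ _ (by norm_num)]
      push_cast
      rw [show (0 : ℤ) - e - -1 = 0 - e + 1 by ring, show (0 : ℤ) - e + 1 - 1 = 0 - e by ring]
      ring
    · rw [QF_card_succ _ _ _ (by omega), QF_zero, QF_zero]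
      simp only [zch_zero, par]
      push_cast
      by_cases he : e = 0
      · subst he
        by_cases hd0 : d = 0
        · subst hd0; simp
        · simp [hd0]; omega
      · simp [he]
        omega
  | succ n ih =>
    intro d e hd
    rcases eq_or_lt_of_le hd with rfl | hd
    · rw [QF_neg _ _ _ (by norm_num)]
      push_cast
      rw [show (n : ℤ) + 1 - e - -1 = n + 1 - e + 1 by ring,
        show (n : ℤ) + 1 - e + 1 - 1 = n + 1 - e by ring]
      ring
    · have hp1 : par (2 * n + 1 + 1) = 1 := by
        unfold par; rw [if_pos ⟨n + 1, by ring⟩]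
      have hp2 : par (2 * n + 2 + 1) = 0 := by
        unfold par; rw [if_neg]; rw [Nat.not_even_iff_odd]; exact ⟨n + 1, by ring⟩
      have step : ∀ d' : ℤ, 0 ≤ d' → ((QF (2 * n + 2) (2 * d') e).card : ℤ) =
          (QF (2 * n + 1) (2 * (d' - 1) + 1) e).card + (QF (2 * n + 1) (2 * d' + 1) (e - 1)).card := by
        intro d' hd'
        rw [QF_card_succ (2 * n + 1) (2 * d') e (by omega), hp1,
          show 2 * (d' - 1) + 1 = 2 * d' - 1 by ring]
        push_cast; rfl
      rw [show 2 * (n + 1) + 1 = 2 * n + 2 + 1 by ring, QF_card_succ _ _ _ (by omega), hp2,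
        show 2 * d + 1 - 1 = 2 * d by ring, show 2 * d + 1 + 1 = 2 * (d + 1) by ring, sub_zero]
      push_cast
      rw [step d (by omega), step (d + 1) (by omega), ih _ _ (by omega), ih _ _ (by omega),
        ih _ _ (by omega), ih _ _ (by omega)]
      simp only [zch_succ]
      ring_nf

theorem choose_alg (n i : ℕ) (hin : i ≤ n) :
    ((n : ℤ) + 1) * (n.choose i * n.choose i - zch n ((i : ℤ) - 1) * n.choose (i + 1)) =
      (n + 1).choose (i + 1) * (n + 1).choose i := by
  have hB : ((i : ℤ) + 1) * n.choose (i + 1) = (n - i) * n.choose i := by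
    rcases le_or_gt i n with h | h
    · have := Nat.choose_succ_right_eq n i
      zify [h] at this
      linarith
    · rw [Nat.choose_eq_zero_of_lt h, Nat.choose_eq_zero_of_lt (by omega)]; simp
  have hC : (i : ℤ) * n.choose i = (n - i + 1) * zch n ((i : ℤ) - 1) := by
    cases i with
    | zero => simp [zch]
    | succ i =>
      rw [show ((i + 1 : ℕ) : ℤ) - 1 = (i : ℕ) by push_cast; ring, zch_nat]
      rcases le_or_gt i n with h | h
      · have := Nat.choose_succ_right_eq n i
        zify [h] at this
        push_cast
        linarith
      · rw [Nat.choose_eq_zero_of_lt h, Nat.choose_eq_zero_of_lt (by omega)]; simp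
  have e1 : (((n + 1).choose (i + 1) : ℕ) : ℤ) = n.choose (i + 1) + n.choose i := by
    rw [Nat.choose_succ_succ]; push_cast; ring
  have e2 : (((n + 1).choose i : ℕ) : ℤ) = n.choose i + zch n ((i : ℤ) - 1) := by
    rw [← zch_nat, zch_succ, zch_nat]
  rw [e1, e2]
  have hq : ((i : ℤ) + 1) * (n - i + 1) ≠ 0 := by
    apply mul_ne_zero <;> omega
  clear e1 e2
  generalize (n.choose i : ℤ) = A at *
  generalize (n.choose (i + 1) : ℤ) = B at *
  generalize zch n ((i : ℤ) - 1) = C at *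
  clear hin
  generalize (n : ℤ) = N at *
  generalize (i : ℤ) = I at *
  apply mul_left_cancel₀ hq
  linear_combination (-(N - I + 1) * A - (N + 2) * (N - I + 1) * C) * hB +
    ((I + 1) * A + (N + 2) * (N - I) * A) * hC

theorem QP_empty (m : ℕ) (π) : QP m π ∅ ↔ IsNCPP m π := by
  unfold QP IsNCPP
  simp

open Classical in
/-- Narayana enumeration (the case `p = 1`): for `1 ≤ j ≤ k`, `k` times the number
of noncrossing pair partitions of `{1, …, 2k}` having exactly `j` right legs at
even positions equals `C(k, j) · C(k, j − 1)`. -/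
theorem card_NCPP_even_right_legs (k j : ℕ) (hk : 1 ≤ k) (hj1 : 1 ≤ j)
    (hjk : j ≤ k) :
    k * ((NCPPset (2 * k)).filter
        (fun π => (π.filter fun b => Even b.2).card = j)).card =
      Nat.choose k j * Nat.choose k (j - 1) := by
  have hcard : ((NCPPset (2 * k)).filter
        (fun π => (π.filter fun b => Even b.2).card = j)).card = (QF (2 * k) 0 j).card := by
    apply Finset.card_nbij' (fun π => (π, ∅)) (fun p => p.1)
    · intro π hπ
      simp only [Finset.coe_filter, Set.mem_ofPred_eq, NCPPset, Finset.mem_filter] at hπ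
      rw [Finset.mem_coe, mem_QF]
      refine ⟨(QP_empty _ _).2 hπ.1.2, by simp, ?_⟩
      unfold evLegs
      rw [← hπ.2]
    · rintro ⟨π, S⟩ hp
      rw [Finset.mem_coe, mem_QF] at hp
      obtain ⟨h, hS, he⟩ := hp
      simp only [Nat.cast_eq_zero, Finset.card_eq_zero] at h hS he
      subst hS
      simp only [Finset.coe_filter, Set.mem_ofPred_eq, NCPPset, Finset.mem_filter,
        Finset.mem_powerset]
      refine ⟨⟨?_, (QP_empty _ _).1 h⟩, ?_⟩
      · intro b hb
        have := h.1 b hb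
        simp only [Finset.mem_product, Finset.mem_Icc]
        omega
      · unfold evLegs at he
        have he' := Nat.cast_injective he
        rw [← he']
    · intro π _; rfl
    · rintro ⟨π, S⟩ hp
      rw [Finset.mem_coe, mem_QF] at hp
      have hS := hp.2.1
      simp only [Nat.cast_eq_zero, Finset.card_eq_zero] at hS
      simp [hS]
  rw [hcard]
  obtain ⟨n, rfl⟩ : ∃ n, k = n + 1 := ⟨k - 1, by omega⟩
  obtain ⟨i, rfl⟩ : ∃ i, j = i + 1 := ⟨j - 1, by omega⟩
  have hp1 : par (2 * n + 1 + 1) = 1 := by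
    unfold par; rw [if_pos ⟨n + 1, by ring⟩]
  rw [show 2 * (n + 1) = 2 * n + 1 + 1 by ring, QF_card_succ _ _ _ le_rfl,
    QF_neg _ _ _ (by norm_num), hp1, zero_add]
  have h := QF_closed n 0 i (by norm_num)
  have hin : i ≤ n := by omega
  have s1 : zch n ((n : ℤ) - i) = n.choose i := by
    rw [← Nat.cast_sub hin, zch_nat, Nat.choose_symm hin]
  have s2 : zch n ((n : ℤ) - i + 1) = zch n ((i : ℤ) - 1) := by
    cases i with
    | zero =>
      rw [show (n : ℤ) - (0 : ℕ) + 1 = (n + 1 : ℕ) by push_cast; ring, zch_nat]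
      simp [zch]
    | succ i =>
      rw [show (n : ℤ) - (i + 1 : ℕ) + 1 = (n - i : ℕ) by
          rw [Nat.cast_sub (by omega)]; push_cast; ring,
        show ((i + 1 : ℕ) : ℤ) - 1 = (i : ℕ) by push_cast; ring, zch_nat, zch_nat,
        Nat.choose_symm (by omega)]
  have s3 : zch n ((n : ℤ) - i - 1) = n.choose (i + 1) := by
    rcases eq_or_lt_of_le hin with rfl | hlt
    · simp [zch]
    · rw [show (n : ℤ) - i - 1 = (n - (i + 1) : ℕ) by
          rw [Nat.cast_sub (by omega)]; push_cast; ring, zch_nat, Nat.choose_symm (by omega)]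
  rw [sub_zero, s1, s2, s3] at h
  have alg := choose_alg n i hin
  zify
  rw [show ((i : ℤ) + 1 - 1) = i by ring, show (0 : ℤ) + 1 = 2 * 0 + 1 by ring, h]
  simp only [Nat.add_sub_cancel]
  rw [← alg]
  ring
end
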